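/- Let $(X_t)_{t\in\mathbb{Z}}$ be a Markov chain with transition matrix $P$ that is irreducible, aperiodic, and positive recurrent on a countable state space $S$. Then $(X_t)_{t\in\mathbb{Z}}$ is stationary if and only if for some (equivalently, every) state $x\in S$, the set $\{t\in\mathbb{Z} : X_t = x\}$ is almost surely unbounded above and below. -/

import Mathlib

open MeasureTheory ProbabilityTheory ENNReal
open scoped Classical

/-- `n`-step transition probabilities of a transition matrix. -/
noncomputable def matpow {S : Type*} (p : S → S → ℝ≥0∞) : ℕ → S → S → ℝ≥0∞
  | 0, x, y => if x = y then 1 else 0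
  | n+1, x, y => ∑' z, matpow p n x z * p z y

/-- Irreducibility of a transition matrix. -/
def Irreducible' {S : Type*} (p : S → S → ℝ≥0∞) : Prop := ∀ x y, ∃ n, 0 < matpow p n x y

/-- Aperiodicity: for each state, the gcd of the set of return times is 1. -/
def Aperiodic' {S : Type*} (p : S → S → ℝ≥0∞) : Prop :=
  ∀ x, ∀ d : ℕ, (∀ n : ℕ, 0 < n → 0 < matpow p n x x → d ∣ n) → d = 1

/-- First return probability: `fret p x n y` is the probability that a chain
with matrix `p` started at `y` first hits `x` at time `n ≥ 1`. -/
noncomputable def fret {S : Type*} (p : S → S → ℝ≥0∞) (x : S) : ℕ → S → ℝ≥0∞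
  | 0, _ => 0
  | n+1, y => ∑' z, p y z * (if z = x then (if n = 0 then 1 else 0) else fret p x n z)

/-- A state is positive recurrent for `p`: return is a.s. and has finite mean. -/
def PosRecMatrix {S : Type*} (p : S → S → ℝ≥0∞) (x : S) : Prop :=
  (∑' n : ℕ, fret p x n x) = 1 ∧ (∑' n : ℕ, (n : ℝ≥0∞) * fret p x n x) < ⊤

/-- Taboo mass: start from `μ`, move by `p`, kill mass at `x` after each step. -/
noncomputable def tab {S : Type*} (p : S → S → ℝ≥0∞) (x : S) (μ : S → ℝ≥0∞) : ℕ → S → ℝ≥0∞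
  | 0, y => μ y
  | n+1, y => if y = x then 0 else ∑' z, tab p x μ n z * p z y

lemma tab_mul {S : Type*} (p : S → S → ℝ≥0∞) (x : S) (μ : S → ℝ≥0∞) (c : ℝ≥0∞) (n : ℕ) (y : S) :
    tab p x (fun z => c * μ z) n y = c * tab p x μ n y := by
  induction n generalizing y with
  | zero => rfl
  | succ n ih =>
    simp only [tab]
    split_ifs
    · simp
    · rw [← ENNReal.tsum_mul_left]
      refine tsum_congr fun z => ?_
      rw [ih, mul_assoc]

lemma tab_mass {S : Type*} (p : S → S → ℝ≥0∞) (hrow : ∀ x, ∑' y, p x y = 1) (x : S)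
    (μ : S → ℝ≥0∞) (n : ℕ) :
    ∑' y, tab p x μ (n+1) y + ∑' z, tab p x μ n z * p z x = ∑' z, tab p x μ n z := by
  have h1 : ∑' z, tab p x μ n z * p z x
      = ∑' y, if y = x then ∑' z, tab p x μ n z * p z y else 0 := by
    symm
    rw [tsum_eq_single x]
    · simp
    · intro b hb; simp [hb]
  rw [h1, ← ENNReal.tsum_add]
  have h2 : ∀ y, (tab p x μ (n+1) y + if y = x then ∑' z, tab p x μ n z * p z y else 0)
      = ∑' z, tab p x μ n z * p z y := by
    intro y
    simp only [tab]
    split_ifs <;> simp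
  simp_rw [h2]
  rw [ENNReal.tsum_comm]
  refine tsum_congr fun z => ?_
  rw [ENNReal.tsum_mul_left, hrow, mul_one]

lemma tab_partial {S : Type*} (p : S → S → ℝ≥0∞) (hrow : ∀ x, ∑' y, p x y = 1) (x : S)
    (μ : S → ℝ≥0∞) (n : ℕ) :
    ∑' y, tab p x μ n y + ∑ m ∈ Finset.range n, ∑' z, tab p x μ m z * p z x = ∑' z, μ z := by
  induction n with
  | zero => simp [tab]
  | succ n ih =>
    rw [Finset.sum_range_succ, add_comm (Finset.sum _ _), ← add_assoc, tab_mass p hrow, ih]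

lemma fret_one {S : Type*} (p : S → S → ℝ≥0∞) (x y : S) : fret p x 1 y = p y x := by
  simp only [fret]
  rw [tsum_eq_single x]
  · simp
  · intro b hb; simp [hb]

lemma tab_fret {S : Type*} (p : S → S → ℝ≥0∞) (x : S) (μ : S → ℝ≥0∞) (n m : ℕ) :
    ∑' z, tab p x μ n z * fret p x (m+2) z = ∑' z, tab p x μ (n+1) z * fret p x (m+1) z := by
  have h1 : ∀ z, fret p x (m+2) z = ∑' w, p z w * (if w = x then 0 else fret p x (m+1) w) := by
    intro z
    rw [fret]
    simp
  simp_rw [h1, ← ENNReal.tsum_mul_left]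
  rw [ENNReal.tsum_comm]
  refine tsum_congr fun w => ?_
  rw [tab]
  split_ifs
  · simp
  · rw [← ENNReal.tsum_mul_right]
    exact tsum_congr fun z => by rw [mul_assoc]

lemma tab_fret' {S : Type*} (p : S → S → ℝ≥0∞) (x : S) (μ : S → ℝ≥0∞) (n : ℕ) :
    ∑' z, tab p x μ n z * p z x = ∑' z, μ z * fret p x (n+1) z := by
  have : ∀ k m, ∑' z, tab p x μ k z * fret p x (m+1) z = ∑' z, μ z * fret p x (k+m+1) z := by
    intro k
    induction k with
    | zero => intro m; simp [tab]
    | succ k ih =>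
      intro m
      rw [← tab_fret, ih (m+1)]
      have : k + (m+1) + 1 = k + 1 + m + 1 := by ring
      rw [this]
  have h := this n 0
  simp only [zero_add, fret_one] at h
  simpa using h

lemma fret_partial {S : Type*} (p : S → S → ℝ≥0∞) (hrow : ∀ x, ∑' y, p x y = 1) (x y : S)
    (n : ℕ) : ∑ m ∈ Finset.range n, fret p x m y ≤ 1 := by
  induction n generalizing y with
  | zero => simp
  | succ n ih =>
    rw [Finset.sum_range_succ']
    simp only [fret, add_zero]
    rw [← Summable.tsum_finsetSum (fun _ _ => ENNReal.summable)]
    refine le_trans (ENNReal.tsum_le_tsum fun z => ?_) (hrow y).le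
    rw [← Finset.mul_sum]
    have key : ∑ i ∈ Finset.range n, (if z = x then (if i = 0 then (1 : ℝ≥0∞) else 0)
        else fret p x i z) ≤ 1 := by
      split_ifs with h
      · rw [Finset.sum_ite_eq']
        split_ifs
        · exact le_rfl
        · exact zero_le_one
      · exact ih z
    exact (mul_le_mul_right key (p y z)).trans (mul_one _).le

lemma hit_le {S : Type*} (p : S → S → ℝ≥0∞) (hrow : ∀ x, ∑' y, p x y = 1) (x y : S) :
    ∑' m, fret p x m y ≤ 1 := by
  rw [ENNReal.tsum_eq_iSup_nat]
  exact iSup_le fun n => fret_partial p hrow x y n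

lemma hit_harm {S : Type*} (p : S → S → ℝ≥0∞) (x : S) (hx : ∑' m, fret p x m x = 1) (y : S) :
    ∑' m, fret p x m y = ∑' z, p y z * ∑' m, fret p x m z := by
  rw [tsum_eq_zero_add' ENNReal.summable]
  simp only [fret, zero_add]
  rw [ENNReal.tsum_comm]
  refine tsum_congr fun z => ?_
  rw [ENNReal.tsum_mul_left]
  congr 1
  split_ifs with h
  · subst h; rw [hx]; simp
  · rfl

lemma hit_one {S : Type*} (p : S → S → ℝ≥0∞) (hrow : ∀ x, ∑' y, p x y = 1)
    (hirr : Irreducible' p) (x : S) (hx : ∑' m, fret p x m x = 1) (y : S) :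
    ∑' m, fret p x m y = 1 := by
  obtain ⟨n, hn⟩ := hirr x y
  induction n generalizing y with
  | zero =>
    have : x = y := by
      by_contra h
      simp [matpow, h] at hn
    rw [← this]; exact hx
  | succ n ih =>
    rw [matpow] at hn
    have : ∃ z, matpow p n x z * p z y ≠ 0 := by
      by_contra! h
      simp [h] at hn
    obtain ⟨z, hz⟩ := this
    have hz1 := ih z (pos_iff_ne_zero.2 (left_ne_zero_of_mul hz))
    have hz2 := right_ne_zero_of_mul hz
    refine le_antisymm (hit_le p hrow x y) ?_
    by_contra! hlt
    have hp : p z y ≠ ⊤ := fun h => by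
      have := ENNReal.le_tsum (f := p z) y
      rw [hrow, h] at this; simp at this
    have h1 := hit_harm p x hx z
    rw [hz1] at h1
    have : ∑' w, p z w * ∑' m, fret p x m w < ∑' w, p z w := by
      refine ENNReal.tsum_lt_tsum (i := y) ?_ (fun w => ?_) ?_
      · rw [← h1]; simp
      · exact (mul_le_mul_right (hit_le p hrow x w) _).trans (mul_one _).le
      · calc _ < p z y * 1 := by
              rw [mul_comm, mul_comm (p z y)]
              exact ENNReal.mul_lt_mul_left hz2 hp hlt
          _ = _ := mul_one _
    rw [← h1, hrow] at this
    exact lt_irrefl _ this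

lemma gcd_aux {S : Type*} (p : S → S → ℝ≥0∞) (x : S) (H : AddSubgroup ℤ)
    (μ : S → ℝ≥0∞) (hμ : ∀ z, μ z = if x = z then 1 else 0)
    (hH : ∀ k : ℕ, ∑' z, tab p x μ k z * p z x ≠ 0 → ((k + 1 : ℕ) : ℤ) ∈ H) (n : ℕ) (y : S)
    (hn : matpow p n x y ≠ 0) : ∃ k : ℕ, tab p x μ k y ≠ 0 ∧ (n : ℤ) - k ∈ H := by
  induction n generalizing y with
  | zero =>
    refine ⟨0, ?_, by simp⟩
    rw [tab, hμ]
    exact hn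
  | succ n ih =>
    rw [matpow] at hn
    have : ∃ z, matpow p n x z * p z y ≠ 0 := by
      by_contra! h
      simp [h] at hn
    obtain ⟨z, hz⟩ := this
    obtain ⟨k, hk, hkH⟩ := ih z (left_ne_zero_of_mul hz)
    have hpos : ∑' z, tab p x μ k z * p z y ≠ 0 := by
      rw [Ne, ENNReal.tsum_eq_zero]
      push Not
      exact ⟨z, mul_ne_zero hk (right_ne_zero_of_mul hz)⟩
    by_cases hy : y = x
    · subst hy
      refine ⟨0, by simp [tab, hμ], ?_⟩
      have := H.add_mem hkH (hH k hpos)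
      convert this using 1
      push_cast; ring
    · refine ⟨k+1, by simpa [tab, hy] using hpos, ?_⟩
      convert hkH using 1
      push_cast; ring

lemma choquet_deny_le (f : ℕ → ℝ) (hf : ∀ k, 0 ≤ f k) (hfs : Summable f) (hf1 : ∑' k, f k ≤ 1)
    (u : ℤ → ℝ) (hu : ∀ t, |u t| ≤ 1) (hharm : ∀ t, HasSum (fun k : ℕ => f k * u (t - k)) (u (t+1)))
    (k₀ : ℕ) (hk : 0 < f k₀) (t : ℤ) : u t - u (t - ((k₀ + 1 : ℕ) : ℤ)) ≤ 0 := by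
  set K : ℤ := ((k₀ + 1 : ℕ) : ℤ) with hK
  set w : ℤ → ℝ := fun t => u t - u (t - K) with hw
  change w t ≤ 0
  have hwb : ∀ t, w t ≤ 2 := fun t => by
    have h1 := abs_le.1 (hu t)
    have h2 := abs_le.1 (hu (t - K))
    simp only [hw]; linarith
  have hbdd : BddAbove (Set.range w) := ⟨2, by rintro _ ⟨t, rfl⟩; exact hwb t⟩
  set M := sSup (Set.range w) with hM
  have hwM : ∀ t, w t ≤ M := fun t => le_csSup hbdd ⟨t, rfl⟩
  by_contra! hpos
  have hMpos : 0 < M := hpos.trans_le (hwM t)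
  have hfk1 : f k₀ ≤ 1 := (hfs.le_tsum k₀ (fun j _ => hf j)).trans hf1
  have step : ∀ t, f k₀ * (M - w (t - K)) ≤ M - w t := by
    intro t
    have h1 : HasSum (fun k : ℕ => f k * w (t - 1 - k)) (w t) := by
      have := (hharm (t-1)).sub (hharm (t - 1 - K))
      have e1 : t - 1 + 1 = t := by ring
      have e2 : t - 1 - K + 1 = t - K := by ring
      rw [e1, e2] at this
      refine this.congr_fun ?_ |> fun h => h
      intro k
      simp only [hw]
      have : t - 1 - K - (k:ℤ) = t - 1 - k - K := by ring
      rw [this]; ring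
    have h2 : HasSum (fun k => f k * (M - w (t - 1 - k))) ((∑' k, f k) * M - w t) := by
      have := (hfs.hasSum.mul_right M).sub h1
      refine this.congr_fun ?_ |> fun h => h
      intro k; ring
    have h3 := le_hasSum h2 k₀ (fun j _ => mul_nonneg (hf j) (sub_nonneg.2 (hwM _)))
    have e3 : t - 1 - (k₀:ℤ) = t - K := by rw [hK]; push_cast; ring
    rw [e3] at h3
    nlinarith
  have iter : ∀ (j : ℕ) t, f k₀ ^ j * (M - w (t - j * K)) ≤ M - w t := by
    intro j
    induction j with
    | zero => intro t; simp
    | succ j ih =>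
      intro t
      have h1 := ih t
      have h2 := step (t - j * K)
      have e : t - j * K - K = t - ((j+1 : ℕ) : ℤ) * K := by push_cast; ring
      rw [e] at h2
      have := mul_le_mul_of_nonneg_left h2 (pow_nonneg hk.le j)
      rw [pow_succ, mul_assoc]
      linarith
  obtain ⟨J, hJ⟩ := exists_nat_gt (4 / M)
  have hJ' : 4 < J * M := by rwa [div_lt_iff₀ hMpos] at hJ
  have hε : 0 < (M/2) * f k₀ ^ J := by positivity
  obtain ⟨_, ⟨t₀, rfl⟩, ht₀⟩ := exists_lt_of_lt_csSup (Set.range_nonempty w)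
    (show M - (M/2) * f k₀ ^ J < sSup (Set.range w) by rw [← hM]; linarith)
  have hbig : ∀ j ≤ J, M/2 ≤ w (t₀ - j * K) := by
    intro j hj
    have h1 := iter j t₀
    have h2 : f k₀ ^ J ≤ f k₀ ^ j := pow_le_pow_of_le_one hk.le hfk1 hj
    have h3 : 0 < f k₀ ^ j := by positivity
    by_contra! hlt
    have : f k₀ ^ j * (M/2) < f k₀ ^ j * (M - w (t₀ - j*K)) :=
      mul_lt_mul_of_pos_left (by linarith) h3
    nlinarith
  have tele : ∀ j : ℕ, j ≤ J → j * (M/2) ≤ u t₀ - u (t₀ - j * K) := by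
    intro j
    induction j with
    | zero => intro _; simp
    | succ j ih =>
      intro hj
      have h1 := ih (by omega)
      have h2 := hbig j (by omega)
      simp only [hw] at h2
      have e : t₀ - j * K - K = t₀ - ((j+1 : ℕ) : ℤ) * K := by push_cast; ring
      rw [e] at h2
      push_cast at *
      linarith
  have h1 := tele J le_rfl
  have h2 := abs_le.1 (hu t₀)
  have h3 := abs_le.1 (hu (t₀ - J * K))
  linarith

lemma choquet_deny (f : ℕ → ℝ) (hf : ∀ k, 0 ≤ f k) (hfs : Summable f) (hf1 : ∑' k, f k ≤ 1)
    (u : ℤ → ℝ) (hu : ∀ t, |u t| ≤ 1) (hharm : ∀ t, HasSum (fun k : ℕ => f k * u (t - k)) (u (t+1)))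
    (k₀ : ℕ) (hk : 0 < f k₀) (t : ℤ) : u t = u (t - ((k₀ + 1 : ℕ) : ℤ)) := by
  have h1 := choquet_deny_le f hf hfs hf1 u hu hharm k₀ hk t
  have h2 := choquet_deny_le f hf hfs hf1 (fun t => - u t) (by simpa using hu)
    (fun t => by simpa using (hharm t).neg) k₀ hk t
  linarith

/-- The Markov property of the frozen statement. -/
def MarkovZ {Ω S : Type*} [MeasurableSpace Ω] (P : Measure Ω) (p : S → S → ℝ≥0∞)
    (X : ℤ → Ω → S) : Prop :=
  ∀ (t : ℤ) (k : ℕ) (x : S) (xs : ℕ → S),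
      P ({ω | X (t + 1) ω = x} ∩ {ω | ∀ i : ℕ, i ≤ k → X (t - i) ω = xs i})
        = p (xs 0) x * P {ω | ∀ i : ℕ, i ≤ k → X (t - i) ω = xs i}

/-- Start in `B` at time `t` and avoid `x` during the next `n` steps. -/
def Ev {Ω S : Type*} (X : ℤ → Ω → S) (B : Set S) (x : S) (t : ℤ) (n : ℕ) : Set Ω :=
  {ω | X t ω ∈ B ∧ ∀ i : ℕ, i < n → X (t + i + 1) ω ≠ x}

section
variable {Ω S : Type*} [MeasurableSpace Ω] [MeasurableSpace S] [MeasurableSingletonClass S]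
    [Countable S] (P : Measure Ω) [IsProbabilityMeasure P] (p : S → S → ℝ≥0∞)
    (X : ℤ → Ω → S) (hXmeas : ∀ t, Measurable (X t))

lemma measurableSet_Ev (hXmeas : ∀ t, Measurable (X t)) (B : Set S) (x : S) (t : ℤ) (n : ℕ) :
    MeasurableSet (Ev X B x t n) := by
  have : Ev X B x t n = (X t ⁻¹' B) ∩ ⋂ i : ℕ, ⋂ _ : i < n, X (t + i + 1) ⁻¹' {x}ᶜ := by
    ext ω; simp [Ev]
  rw [this]
  exact (hXmeas t (Set.to_countable B).measurableSet).inter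
    (MeasurableSet.iInter fun i => MeasurableSet.iInter fun _ =>
      hXmeas _ (measurableSet_singleton x).compl)

lemma markov_past (hXmeas : ∀ t, Measurable (X t)) (hp : ∀ z y, p z y ≠ ⊤)
    (hm : MarkovZ P p X) (t : ℤ) (k : ℕ) (B : Set (Fin (k+1) → S)) (z y : S) :
    P ((fun ω (i : Fin (k+1)) => X (t - (i:ℕ)) ω) ⁻¹' B ∩ {ω | X t ω = z} ∩ {ω | X (t+1) ω = y})
      = p z y * P ((fun ω (i : Fin (k+1)) => X (t - (i:ℕ)) ω) ⁻¹' B ∩ {ω | X t ω = z}) := by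
  set V : Ω → (Fin (k+1) → S) := fun ω (i : Fin (k+1)) => X (t - (i:ℕ)) ω with hV
  have hVm : Measurable V := measurable_pi_lambda _ fun i => hXmeas _
  have hz : MeasurableSet {ω | X t ω = z} := hXmeas t (measurableSet_singleton z)
  have hy : MeasurableSet {ω | X (t+1) ω = y} := hXmeas (t+1) (measurableSet_singleton y)
  have hB : ∀ B : Set (Fin (k+1) → S), MeasurableSet B := fun B => (Set.to_countable B).measurableSet
  have key : Measure.map V (P.restrict ({ω | X t ω = z} ∩ {ω | X (t+1) ω = y}))
      = p z y • Measure.map V (P.restrict {ω | X t ω = z}) := by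
    refine Measure.ext_of_singleton fun v => ?_
    rw [Measure.smul_apply, Measure.map_apply hVm (hB _), Measure.map_apply hVm (hB _),
      Measure.restrict_apply (hVm (hB _)), Measure.restrict_apply (hVm (hB _)), smul_eq_mul]
    by_cases hv : v 0 = z
    · have e1 : V ⁻¹' {v} ∩ {ω | X t ω = z}
          = {ω | ∀ i : ℕ, i ≤ k → X (t - i) ω = v (Fin.ofNat (k+1) i)} := by
        ext ω
        simp only [Set.mem_inter_iff, Set.mem_preimage, Set.mem_singleton_iff, Set.mem_ofPred_eq]
        constructor
        · rintro ⟨h, -⟩ i hi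
          rw [← h]
          simp only [hV, Fin.ofNat]
          rw [Nat.mod_eq_of_lt (by omega)]
        · intro h
          have h0 : V ω = v := by
            funext i
            have := h i (by omega)
            simpa [hV] using this
          refine ⟨h0, ?_⟩
          rw [← hv, ← h0]; simp [hV]
      have e2 : V ⁻¹' {v} ∩ ({ω | X t ω = z} ∩ {ω | X (t+1) ω = y})
          = {ω | X (t+1) ω = y} ∩ (V ⁻¹' {v} ∩ {ω | X t ω = z}) := by
        ext ω; simp only [Set.mem_inter_iff]; tauto
      rw [e2, e1, hm t k y (fun i => v (Fin.ofNat (k+1) i))]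
      congr 2
    · have e1 : V ⁻¹' {v} ∩ {ω | X t ω = z} = ∅ := by
        ext ω
        simp only [Set.mem_inter_iff, Set.mem_preimage, Set.mem_singleton_iff, Set.mem_ofPred_eq,
          Set.mem_empty_iff_false, iff_false, not_and]
        rintro h h'
        apply hv
        rw [← h, ← h']; simp [hV]
      rw [← Set.inter_assoc, e1]; simp
  have := congrArg (fun m => m B) key
  simp only [Measure.smul_apply, smul_eq_mul] at this
  rw [Measure.map_apply hVm (hB _), Measure.map_apply hVm (hB _),
      Measure.restrict_apply (hVm (hB _)), Measure.restrict_apply (hVm (hB _))] at this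
  rw [Set.inter_assoc]; exact this

lemma ev_markov (hXmeas : ∀ t, Measurable (X t)) (hp : ∀ z y, p z y ≠ ⊤)
    (hm : MarkovZ P p X) (B : Set S) (x : S) (t : ℤ) (n : ℕ) (z y : S) :
    P (Ev X B x t n ∩ {ω | X (t+n) ω = z} ∩ {ω | X (t+n+1) ω = y})
      = p z y * P (Ev X B x t n ∩ {ω | X (t+n) ω = z}) := by
  have e : Ev X B x t n = (fun ω (i : Fin (n+1)) => X (t + n - (i:ℕ)) ω) ⁻¹'
      {v | v (Fin.last n) ∈ B ∧ ∀ i : Fin (n+1), i.1 < n → v i ≠ x} := by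
    ext ω
    simp only [Ev, Set.mem_ofPred_eq, Set.mem_preimage, Fin.val_last, add_sub_cancel_right]
    refine and_congr_right fun _ => ⟨fun h i hi => ?_, fun h i hi => ?_⟩
    · have := h (n - 1 - i) (by omega)
      have e : t + ((n - 1 - i.1 : ℕ):ℤ) + 1 = t + n - (i.1 : ℤ) := by omega
      rwa [e] at this
    · have := h ⟨n - 1 - i, by omega⟩ (by simp; omega)
      have e : t + n - ((n - 1 - i : ℕ):ℤ) = t + i + 1 := by omega
      simp only [e] at this
      exact this
  rw [e]
  exact markov_past P p X hXmeas hp hm (t+n) n _ z y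

lemma sum_fiber (hXmeas : ∀ t, Measurable (X t)) (t : ℤ) (E : Set Ω) :
    P E = ∑' z, P (E ∩ {ω | X t ω = z}) := by
  have h : ∀ z, P (E ∩ {ω | X t ω = z}) = P.restrict E (X t ⁻¹' {z}) := by
    intro z
    rw [Measure.restrict_apply (hXmeas t (measurableSet_singleton z)), Set.inter_comm]
    rfl
  simp_rw [h]
  rw [← measure_iUnion]
  · have : (⋃ z, X t ⁻¹' {z}) = Set.univ := by
      ext ω; simp
    rw [this, Measure.restrict_apply_univ]
  · intro a b hab
    exact Disjoint.preimage _ (by simpa using hab)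
  · exact fun z => hXmeas t (measurableSet_singleton z)

lemma ev_step (hXmeas : ∀ t, Measurable (X t)) (hp : ∀ z y, p z y ≠ ⊤)
    (hm : MarkovZ P p X) (B : Set S) (x : S) (t : ℤ) (n : ℕ) (y : S) :
    P (Ev X B x t n ∩ {ω | X (t+n+1) ω = y})
      = ∑' z, P (Ev X B x t n ∩ {ω | X (t+n) ω = z}) * p z y := by
  rw [sum_fiber P X hXmeas (t+n)]
  refine tsum_congr fun z => ?_
  rw [Set.inter_right_comm, ev_markov P p X hXmeas hp hm, mul_comm]

lemma ev_tab (hXmeas : ∀ t, Measurable (X t)) (hp : ∀ z y, p z y ≠ ⊤)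
    (hm : MarkovZ P p X) (B : Set S) (x : S) (t : ℤ) (n : ℕ) (y : S) :
    P (Ev X B x t n ∩ {ω | X (t+n) ω = y})
      = tab p x (fun z => P ({ω | X t ω ∈ B} ∩ {ω | X t ω = z})) n y := by
  induction n generalizing y with
  | zero => simp [Ev, tab]
  | succ n ih =>
    rw [tab]
    have e : Ev X B x t (n+1) ∩ {ω | X (t + (n+1 : ℕ)) ω = y}
        = if y = x then ∅ else Ev X B x t n ∩ {ω | X (t+n+1) ω = y} := by
      have e' : t + ((n+1 : ℕ):ℤ) = t + n + 1 := by push_cast; ring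
      rw [e']
      split_ifs with h
      · ext ω
        simp only [Ev, Set.mem_inter_iff, Set.mem_ofPred_eq, Set.mem_empty_iff_false, iff_false]
        rintro ⟨⟨-, h1⟩, h2⟩
        exact h1 n (by omega) (h2.trans h)
      · ext ω
        simp only [Ev, Set.mem_inter_iff, Set.mem_ofPred_eq]
        constructor
        · rintro ⟨⟨h0, h1⟩, h2⟩
          exact ⟨⟨h0, fun i hi => h1 i (by omega)⟩, h2⟩
        · rintro ⟨⟨h0, h1⟩, h2⟩
          refine ⟨⟨h0, fun i hi => ?_⟩, h2⟩
          rcases Nat.lt_succ_iff_lt_or_eq.1 hi with h' | rfl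
          · exact h1 i h'
          · rw [h2]; exact h
    rw [e]
    split_ifs
    · simp
    · rw [ev_step P p X hXmeas hp hm]
      simp_rw [ih]

lemma forward_hit (hXmeas : ∀ t, Measurable (X t)) (hrow : ∀ x, ∑' y, p x y = 1)
    (hp : ∀ z y, p z y ≠ ⊤) (hm : MarkovZ P p X) (x : S) (hh : ∀ y, ∑' m, fret p x m y = 1)
    (t : ℤ) : P {ω | ∀ s, t < s → X s ω ≠ x} = 0 := by
  set N : Set Ω := {ω | ∀ s, t < s → X s ω ≠ x} with hN
  set μ : S → ℝ≥0∞ := fun z => P ({ω | X t ω ∈ (Set.univ : Set S)} ∩ {ω | X t ω = z}) with hμ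
  have hμ1 : ∑' z, μ z = 1 := by
    rw [← measure_univ (μ := P), sum_fiber P X hXmeas t Set.univ]
    exact tsum_congr fun z => by simp [hμ]
  have h1 : ∀ n, P N ≤ ∑' y, tab p x μ n y := by
    intro n
    simp_rw [hμ, ← ev_tab P p X hXmeas hp hm, ← sum_fiber P X hXmeas]
    refine measure_mono fun ω hω => ⟨trivial, fun i _ => hω _ (by omega)⟩
  have h2 : ∑' n, ∑' z, tab p x μ n z * p z x = 1 := by
    simp_rw [tab_fret']
    rw [ENNReal.tsum_comm]
    simp_rw [ENNReal.tsum_mul_left]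
    rw [← hμ1]
    refine tsum_congr fun z => ?_
    have := hh z
    rw [tsum_eq_zero_add' ENNReal.summable, fret, zero_add] at this
    rw [this, mul_one]
  have h3 : P N + 1 ≤ 1 := by
    conv_lhs => rw [← h2]
    rw [ENNReal.tsum_eq_iSup_nat, ENNReal.add_iSup]
    refine iSup_le fun n => ?_
    have := tab_partial p hrow x μ n
    rw [hμ1] at this
    conv_rhs => rw [← this]
    gcongr
    exact h1 n
  by_contra hne
  have := ENNReal.lt_add_right (a := 1) one_ne_top hne
  rw [add_comm] at h3
  exact absurd h3 (not_le.2 this)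

lemma last_visit (hXmeas : ∀ t, Measurable (X t)) (x : S)
    (hb : ∀ᵐ ω ∂P, ∀ n : ℤ, ∃ t, t ≤ n ∧ X t ω = x) (t : ℤ) (F : Set Ω) (hF : MeasurableSet F) :
    P F = ∑' k : ℕ, P (Ev X {x} x (t - k) k ∩ F) := by
  rw [← measure_iUnion]
  · refine measure_congr ?_
    filter_upwards [hb] with ω hω
    have hex : ∃ k : ℕ, X (t - k) ω = x := by
      obtain ⟨s, hs, hs'⟩ := hω t
      exact ⟨(t - s).toNat, by rw [Int.toNat_of_nonneg (by omega)]; simpa using hs'⟩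
    refine propext ⟨fun h => ?_, fun h => ?_⟩
    · refine Set.mem_iUnion.2 ⟨Nat.find hex, ⟨Nat.find_spec hex, fun i hi hc => ?_⟩, h⟩
      refine Nat.find_min hex (m := Nat.find hex - i - 1) (by omega) ?_
      refine Eq.trans ?_ hc
      congr 1
      omega
    · obtain ⟨k, hk⟩ := Set.mem_iUnion.1 h
      exact hk.2
  · have : ∀ i j : ℕ, i < j → Disjoint (Ev X {x} x (t - i) i ∩ F) (Ev X {x} x (t - j) j ∩ F) := by
      intro i j hij
      rw [Set.disjoint_left]
      rintro ω ⟨⟨h1, -⟩, -⟩ ⟨⟨-, h2⟩, -⟩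
      refine h2 (j - i - 1) (by omega) ?_
      rw [← Set.mem_singleton_iff.1 h1]
      congr 1
      omega
    intro i j hij
    rcases lt_or_gt_of_ne hij with h | h
    · exact this i j h
    · exact (this j i h).symm
  · exact fun k => (measurableSet_Ev X hXmeas _ _ _ _).inter hF

lemma marginal_const (hXmeas : ∀ t, Measurable (X t)) (hrow : ∀ x, ∑' y, p x y = 1)
    (hp : ∀ z y, p z y ≠ ⊤) (hm : MarkovZ P p X) (haper : Aperiodic' p) (x : S)
    (hb : ∀ᵐ ω ∂P, ∀ n : ℤ, ∃ t, t ≤ n ∧ X t ω = x) (t : ℤ) (y : S) :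
    P {ω | X (t+1) ω = y} = P {ω | X t ω = y} := by
  set δ : S → ℝ≥0∞ := fun z => if x = z then 1 else 0 with hδ
  set U : ℤ → ℝ≥0∞ := fun t => P {ω | X t ω = x} with hU
  set f : ℕ → ℝ≥0∞ := fun k => ∑' z, tab p x δ k z * p z x with hf
  have hμ : ∀ t, (fun z => P ({ω | X t ω ∈ ({x} : Set S)} ∩ {ω | X t ω = z}))
      = fun z => U t * δ z := by
    intro t
    funext z
    simp only [hδ, hU]
    split_ifs with h
    · subst h; simp
    · rw [mul_zero]
      convert measure_empty (μ := P)
      ext ω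
      simp only [Set.mem_singleton_iff, Set.mem_inter_iff, Set.mem_ofPred_eq,
        Set.mem_empty_iff_false, iff_false, not_and]
      intro h1 h2
      exact h (h1.symm.trans h2)
  have hmarg : ∀ t y, P {ω | X t ω = y} = ∑' k : ℕ, U (t - k) * tab p x δ k y := by
    intro t y
    rw [last_visit P X hXmeas x hb t {ω | X t ω = y} (hXmeas t (measurableSet_singleton y))]
    refine tsum_congr fun k => ?_
    have := ev_tab P p X hXmeas hp hm {x} x (t - k) k y
    rw [hμ, tab_mul, sub_add_cancel] at this
    exact this
  have hren : ∀ t, U (t+1) = ∑' k : ℕ, U (t - k) * f k := by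
    intro t
    simp only [hU]
    rw [last_visit P X hXmeas x hb t {ω | X (t+1) ω = x} (hXmeas (t+1) (measurableSet_singleton x))]
    refine tsum_congr fun k => ?_
    have := ev_step P p X hXmeas hp hm {x} x (t - k) k x
    simp_rw [ev_tab P p X hXmeas hp hm, hμ, tab_mul, sub_add_cancel, mul_assoc,
      ENNReal.tsum_mul_left] at this
    exact this
  have hδ1 : ∑' z, δ z = 1 := by
    rw [tsum_eq_single x]
    · simp [hδ]
    · intro b hb; simp [hδ, hb.symm]
  have hf1 : ∑' k, f k ≤ 1 := by
    rw [ENNReal.tsum_eq_iSup_nat]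
    refine iSup_le fun n => ?_
    rw [← hδ1, ← tab_partial p hrow x δ n]
    exact le_add_self
  have hffin : ∑' k, f k ≠ ⊤ := ne_top_of_le_ne_top one_ne_top hf1
  have hfk : ∀ k, f k ≠ ⊤ := fun k => ENNReal.ne_top_of_tsum_ne_top hffin k
  have hU1 : ∀ t, U t ≤ 1 := fun t => prob_le_one
  have hUfin : ∀ t, U t ≠ ⊤ := fun t => ne_top_of_le_ne_top one_ne_top (hU1 t)
  have hper : ∀ k₀, f k₀ ≠ 0 → ∀ t, U t = U (t - ((k₀ + 1 : ℕ) : ℤ)) := by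
    intro k₀ hk₀ t
    have := choquet_deny (fun k => (f k).toReal) (fun k => toReal_nonneg)
      (ENNReal.summable_toReal hffin)
      (by
        rw [← ENNReal.tsum_toReal_eq hfk]
        exact ENNReal.toReal_mono one_ne_top hf1)
      (fun t => (U t).toReal)
      (fun t => by
        rw [abs_of_nonneg toReal_nonneg]
        exact ENNReal.toReal_mono one_ne_top (hU1 t))
      (fun t => by
        have h := hren t
        have hne : ∑' k : ℕ, U (t - k) * f k ≠ ⊤ := h ▸ hUfin _
        rw [h]
        have := ENNReal.hasSum_toReal hne
        rw [← ENNReal.tsum_toReal_eq (fun k => ENNReal.ne_top_of_tsum_ne_top hne k)] at this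
        simpa only [ENNReal.toReal_mul, mul_comm] using this)
      k₀ (ENNReal.toReal_pos hk₀ (hfk _)) t
    exact (ENNReal.toReal_eq_toReal_iff' (hUfin _) (hUfin _)).1 this
  let H : AddSubgroup ℤ :=
    { carrier := {a | ∀ t, U (t + a) = U t}
      zero_mem' := by intro t; simp
      add_mem' := by
        intro a b ha hb t
        rw [← add_assoc, hb, ha]
      neg_mem' := by
        intro a ha t
        have := ha (t + -a)
        rw [← this]; simp }
  have hH : ∀ k : ℕ, f k ≠ 0 → ((k + 1 : ℕ) : ℤ) ∈ H := by
    intro k hk t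
    rw [hper k hk (t + ((k + 1 : ℕ) : ℤ))]; simp
  have hret : ∀ n : ℕ, matpow p n x x ≠ 0 → (n : ℤ) ∈ H := by
    intro n hn
    obtain ⟨k, hk, hkH⟩ := gcd_aux p x H δ (fun _ => rfl) hH n x hn
    cases k with
    | zero => simpa using hkH
    | succ k => simp [tab] at hk
  obtain ⟨a, ha⟩ := Int.subgroup_cyclic H
  have ha1 : a.natAbs = 1 := by
    refine haper x _ fun n _ hn => ?_
    have := hret n hn.ne'
    rw [ha, AddSubgroup.mem_closure_singleton] at this
    obtain ⟨m, hm⟩ := this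
    rw [← Int.natCast_dvd_natCast, Int.natAbs_dvd]
    exact ⟨m, by rw [← hm]; simp [mul_comm]⟩
  have h1H : (1 : ℤ) ∈ H := by
    have haH : a ∈ H := by rw [ha]; exact AddSubgroup.mem_closure_singleton_self a
    rcases Int.natAbs_eq a with h | h
    · rw [h, ha1] at haH; simpa using haH
    · rw [h, ha1] at haH; simpa using H.neg_mem haH
  rw [hmarg, hmarg]
  refine tsum_congr fun k => ?_
  have := h1H (t - k)
  rw [← this]
  congr 2
  ring

lemma stationary_of_marginal (hXmeas : ∀ t, Measurable (X t)) (hm : MarkovZ P p X)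
    (hc : ∀ t y, P {ω | X (t+1) ω = y} = P {ω | X t ω = y}) :
    Measure.map (fun ω (t : ℤ) => X (t + 1) ω) P = Measure.map (fun ω (t : ℤ) => X t ω) P := by
  have hfd : ∀ (k : ℕ) (t : ℤ) (xs : ℕ → S),
      P {ω | ∀ i : ℕ, i ≤ k → X (t + 1 - i) ω = xs i} = P {ω | ∀ i : ℕ, i ≤ k → X (t - i) ω = xs i} := by
    intro k
    induction k with
    | zero => intro t xs; simpa using hc t (xs 0)
    | succ k ih =>
      intro t xs
      have e : ∀ t, {ω | ∀ i : ℕ, i ≤ k+1 → X (t - i) ω = xs i} = {ω | X (t - 1 + 1) ω = xs 0} ∩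
          {ω | ∀ i : ℕ, i ≤ k → X (t - 1 - i) ω = xs (i+1)} := by
        intro t
        ext ω
        simp only [Set.mem_inter_iff, Set.mem_ofPred_eq, sub_add_cancel]
        constructor
        · intro h
          refine ⟨by simpa using h 0 (by omega), fun i hi => ?_⟩
          rw [← h (i+1) (by omega)]
          congr 1; push_cast; ring
        · rintro ⟨h0, h1⟩ i hi
          cases i with
          | zero => simpa using h0
          | succ i =>
            rw [← h1 i (by omega)]
            congr 1; push_cast; ring
      rw [e, e, hm _ _ _ (fun i => xs (i+1)), hm _ _ _ (fun i => xs (i+1))]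
      have := ih (t - 1) (fun i => xs (i+1))
      have e3 : t - 1 + 1 = t + 1 - 1 := by ring
      rw [e3] at this
      rw [this]
  have hfd' : ∀ (k : ℕ) (t : ℤ),
      Measure.map (fun ω (i : Fin (k+1)) => X (t + 1 - (i:ℕ)) ω) P
        = Measure.map (fun ω (i : Fin (k+1)) => X (t - (i:ℕ)) ω) P := by
    intro k t
    refine Measure.ext_of_singleton fun v => ?_
    have hs : MeasurableSet ({v} : Set (Fin (k+1) → S)) := measurableSet_singleton v
    have e : ∀ t : ℤ, (fun ω (i : Fin (k+1)) => X (t - (i:ℕ)) ω) ⁻¹' {v}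
        = {ω | ∀ i : ℕ, i ≤ k → X (t - i) ω = v (Fin.ofNat (k+1) i)} := by
      intro t
      ext ω
      simp only [Set.mem_preimage, Set.mem_singleton_iff, Set.mem_ofPred_eq]
      constructor
      · rintro h i hi
        rw [← h]
        simp only [Fin.ofNat]
        rw [Nat.mod_eq_of_lt (by omega)]
      · intro h
        funext i
        have := h i (by omega)
        simpa using this
    rw [Measure.map_apply (measurable_pi_lambda _ fun i => hXmeas _) hs,
      Measure.map_apply (measurable_pi_lambda _ fun i => hXmeas _) hs, e, e]
    exact hfd k t _
  have hm1 : Measurable (fun ω (t : ℤ) => X (t + 1) ω) := measurable_pi_lambda _ fun i => hXmeas _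
  have hm2 : Measurable (fun ω (t : ℤ) => X t ω) := measurable_pi_lambda _ fun i => hXmeas _
  have := Measure.isProbabilityMeasure_map (μ := P) hm2.aemeasurable
  refine IsProjectiveLimit.unique (P := fun I : Finset ℤ =>
    (Measure.map (fun ω (t : ℤ) => X t ω) P).map I.restrict) ?_ (fun I => rfl)
  intro I
  have hr : Measurable (I.restrict (π := fun _ : ℤ => S)) := Finset.measurable_restrict I
  beta_reduce
  rw [Measure.map_map hr hm1, Measure.map_map hr hm2]
  obtain ⟨b, hb⟩ := I.bddAbove
  obtain ⟨a, ha⟩ := I.bddBelow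
  set k := (b - a).toNat with hk
  let φ : (Fin (k+1) → S) → (I → S) := fun v i => v (Fin.ofNat (k+1) (b - i.1).toNat)
  have hφ : Measurable φ := measurable_pi_lambda _ fun i => measurable_pi_apply _
  have hidx : ∀ i : I, (((Fin.ofNat (k+1) (b - i.1).toNat : Fin (k+1)) : ℕ) : ℤ) = b - i.1 := by
    intro i
    have h1 : i.1 ≤ b := hb i.2
    have h2 : a ≤ i.1 := ha i.2
    simp only [Fin.ofNat]
    rw [Nat.mod_eq_of_lt (by omega)]
    omega
  have e1 : I.restrict (π := fun _ : ℤ => S) ∘ (fun ω (t : ℤ) => X (t + 1) ω)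
      = φ ∘ (fun ω (i : Fin (k+1)) => X (b + 1 - (i:ℕ)) ω) := by
    funext ω i
    simp only [Function.comp, Finset.restrict, φ]
    rw [hidx]; congr 1; ring
  have e2 : I.restrict (π := fun _ : ℤ => S) ∘ (fun ω (t : ℤ) => X t ω)
      = φ ∘ (fun ω (i : Fin (k+1)) => X (b - (i:ℕ)) ω) := by
    funext ω i
    simp only [Function.comp, Finset.restrict, φ]
    rw [hidx]; congr 1; ring
  rw [e1, e2, ← Measure.map_map hφ (measurable_pi_lambda _ fun i => hXmeas _),
    ← Measure.map_map hφ (measurable_pi_lambda _ fun i => hXmeas _), hfd']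

lemma backward_of_stationary (hXmeas : ∀ t, Measurable (X t)) (x : S)
    (hst : Measure.map (fun ω (t : ℤ) => X (t + 1) ω) P = Measure.map (fun ω (t : ℤ) => X t ω) P)
    (hf : P {ω | ∀ s, X s ω ≠ x} = 0) (n : ℤ) : P {ω | ∀ t, t ≤ n → X t ω ≠ x} = 0 := by
  have hm1 : Measurable (fun ω (t : ℤ) => X (t + 1) ω) := measurable_pi_lambda _ fun i => hXmeas _
  have hm2 : Measurable (fun ω (t : ℤ) => X t ω) := measurable_pi_lambda _ fun i => hXmeas _
  have hCm : ∀ n : ℤ, MeasurableSet {v : ℤ → S | ∀ t, t ≤ n → v t ≠ x} := by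
    intro n
    have : {v : ℤ → S | ∀ t, t ≤ n → v t ≠ x}
        = ⋂ t : ℤ, ⋂ _ : t ≤ n, (fun v : ℤ → S => v t) ⁻¹' {x}ᶜ := by
      ext v; simp
    rw [this]
    exact MeasurableSet.iInter fun i => MeasurableSet.iInter fun _ =>
      measurable_pi_apply _ (measurableSet_singleton x).compl
  have hstep : ∀ n : ℤ, P {ω | ∀ t, t ≤ n + 1 → X t ω ≠ x} = P {ω | ∀ t, t ≤ n → X t ω ≠ x} := by
    intro n
    have := congrArg (fun m => m {v : ℤ → S | ∀ t, t ≤ n → v t ≠ x}) hst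
    beta_reduce at this
    rw [Measure.map_apply hm1 (hCm n), Measure.map_apply hm2 (hCm n)] at this
    refine Eq.trans ?_ this
    congr 1
    ext ω
    simp only [Set.mem_ofPred_eq, Set.mem_preimage]
    constructor
    · intro h t ht; exact h (t+1) (by omega)
    · intro h t ht
      have := h (t-1) (by omega)
      simpa using this
  have hconst : ∀ m : ℕ, P {ω | ∀ t, t ≤ n + m → X t ω ≠ x} = P {ω | ∀ t, t ≤ n → X t ω ≠ x} := by
    intro m
    induction m with
    | zero => simp
    | succ m ih =>
      rw [← ih, ← hstep (n + m)]
      have e : n + ((m + 1 : ℕ) : ℤ) = n + m + 1 := by push_cast; ring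
      rw [e]
  have ht := tendsto_measure_iInter_atTop (μ := P) (s := fun m : ℕ => {ω | ∀ t, t ≤ n + m → X t ω ≠ x})
    (fun m => (hm2 (hCm (n+m))).nullMeasurableSet)
    (fun i j hij ω hω t ht => hω t (by omega)) ⟨0, measure_ne_top _ _⟩
  have e : (⋂ m : ℕ, {ω | ∀ t, t ≤ n + m → X t ω ≠ x}) = {ω | ∀ s, X s ω ≠ x} := by
    ext ω
    simp only [Set.mem_iInter, Set.mem_ofPred_eq]
    exact ⟨fun h s => h (s - n).toNat s (by omega), fun h _ s _ => h s⟩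
  rw [e, hf] at ht
  have hc : (P ∘ fun m : ℕ => {ω | ∀ t, t ≤ n + m → X t ω ≠ x})
      = fun _ => P {ω | ∀ t, t ≤ n → X t ω ≠ x} := funext hconst
  rw [hc] at ht
  exact tendsto_nhds_unique tendsto_const_nhds ht

end

/-- A Markov chain indexed by all of `ℤ` with an irreducible, aperiodic,
positive recurrent transition matrix is stationary if and only if it is
bi-recurrent for some (equivalently, every) state. -/
theorem stationary_iff_birecurrent
    {Ω S : Type*} [MeasurableSpace Ω] [MeasurableSpace S] [MeasurableSingletonClass S]
    [Countable S] (P : Measure Ω) [IsProbabilityMeasure P]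
    (p : S → S → ℝ≥0∞) (hrow : ∀ x, ∑' y, p x y = 1)
    (hirr : Irreducible' p) (haper : Aperiodic' p) (hposrec : ∀ x, PosRecMatrix p x)
    (X : ℤ → Ω → S) (hXmeas : ∀ t, Measurable (X t))
    (hmarkov : ∀ (t : ℤ) (k : ℕ) (x : S) (xs : ℕ → S),
      P ({ω | X (t + 1) ω = x} ∩ {ω | ∀ i : ℕ, i ≤ k → X (t - i) ω = xs i})
        = p (xs 0) x * P {ω | ∀ i : ℕ, i ≤ k → X (t - i) ω = xs i}) :
    ((Measure.map (fun ω (t : ℤ) => X (t + 1) ω) P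
        = Measure.map (fun ω (t : ℤ) => X t ω) P)
      ↔ ∃ x : S, ∀ᵐ ω ∂P,
          (∀ n : ℤ, ∃ t, n ≤ t ∧ X t ω = x) ∧ (∀ n : ℤ, ∃ t, t ≤ n ∧ X t ω = x))
    ∧ ((Measure.map (fun ω (t : ℤ) => X (t + 1) ω) P
        = Measure.map (fun ω (t : ℤ) => X t ω) P)
      ↔ ∀ x : S, ∀ᵐ ω ∂P,
          (∀ n : ℤ, ∃ t, n ≤ t ∧ X t ω = x) ∧ (∀ n : ℤ, ∃ t, t ≤ n ∧ X t ω = x)) := by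
  have hp : ∀ z y, p z y ≠ ⊤ := fun z y h => by
    have := ENNReal.le_tsum (f := p z) y
    rw [hrow, h] at this; simp at this
  have hm : MarkovZ P p X := hmarkov
  have hfw : ∀ (x : S) (t : ℤ), P {ω | ∀ s, t < s → X s ω ≠ x} = 0 := fun x t =>
    forward_hit P p X hXmeas hrow hp hm x (hit_one p hrow hirr x (hposrec x).1) t
  have h1 : (Measure.map (fun ω (t : ℤ) => X (t + 1) ω) P
        = Measure.map (fun ω (t : ℤ) => X t ω) P) → ∀ x : S, ∀ᵐ ω ∂P,
          (∀ n : ℤ, ∃ t, n ≤ t ∧ X t ω = x) ∧ (∀ n : ℤ, ∃ t, t ≤ n ∧ X t ω = x) := by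
    intro hst x
    have hb := backward_of_stationary P X hXmeas x hst
      (measure_mono_null (by intro ω hω s _; exact hω s) (hfw x 0))
    have ha1 : ∀ᵐ ω ∂P, ∀ n : ℤ, ∃ t, n ≤ t ∧ X t ω = x := by
      rw [ae_all_iff]
      intro n
      rw [ae_iff]
      refine measure_mono_null ?_ (hfw x n)
      intro ω hω s hs hc
      exact hω ⟨s, hs.le, hc⟩
    have ha2 : ∀ᵐ ω ∂P, ∀ n : ℤ, ∃ t, t ≤ n ∧ X t ω = x := by
      rw [ae_all_iff]
      intro n
      rw [ae_iff]
      refine measure_mono_null ?_ (hb n)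
      intro ω hω s hs hc
      exact hω ⟨s, hs, hc⟩
    exact ha1.and ha2
  have h2 : (∃ x : S, ∀ᵐ ω ∂P,
          (∀ n : ℤ, ∃ t, n ≤ t ∧ X t ω = x) ∧ (∀ n : ℤ, ∃ t, t ≤ n ∧ X t ω = x)) →
      (Measure.map (fun ω (t : ℤ) => X (t + 1) ω) P = Measure.map (fun ω (t : ℤ) => X t ω) P) := by
    rintro ⟨x, hx⟩
    exact stationary_of_marginal P p X hXmeas hm fun t y =>
      marginal_const P p X hXmeas hrow hp hm haper x (hx.mono fun _ h => h.2) t y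
  have hS : Nonempty S := by
    obtain ⟨ω⟩ : Nonempty Ω := nonempty_of_isProbabilityMeasure P
    exact ⟨X 0 ω⟩
  obtain ⟨x₀⟩ := hS
  exact ⟨⟨fun h => ⟨x₀, h1 h x₀⟩, h2⟩, ⟨h1, fun h => h2 ⟨x₀, h x₀⟩⟩⟩
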